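/- For real numbers α and β, the sequence (k² + αk + β)_{k=0}^∞ is a classical multiplier sequence if and only if α ≥ −1 and 0 ≤ β ≤ (α + 1)²/4. -/

import Mathlib

open Polynomial

/-- A real polynomial is *hyperbolic* if all of its complex roots are real
(the zero polynomial and nonzero constants are vacuously hyperbolic). -/
def Hyperbolic (p : Polynomial ℝ) : Prop :=
  ∀ z ∈ (p.map (algebraMap ℝ ℂ)).roots, z.im = 0

/-- `γ` is a multiplier sequence for the simple set `q`: the linear operator
sending `q k` to `γ k • q k` maps hyperbolic polynomials to hyperbolic
polynomials.  (Since `q` is a simple set, every real polynomial has a unique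
expansion `∑ a k • q k`, so this quantification over coefficient families
expresses exactly that property.) -/
def IsMultiplierSeqFor (q : ℕ → Polynomial ℝ) (γ : ℕ → ℝ) : Prop :=
  ∀ (n : ℕ) (a : ℕ → ℝ),
    Hyperbolic (∑ k ∈ Finset.range n, C (a k) * q k) →
    Hyperbolic (∑ k ∈ Finset.range n, C (γ k * a k) * q k)

/-!
A real polynomial is hyperbolic iff it splits over `ℝ`, and also iff it is zero or has no zero in
the open upper half-plane `H`.

*Sufficiency.* The sequence acts on polynomials as `x² D² + (α + 1) x D + β`. The hypotheses on
`α` and `β` say exactly that this is `(u + x D)(v + x D)` with `u, v ≥ 0` if `x` is treated as a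
constant commuting with `D`. Freezing `x = z ∈ H`, each factor `u + z D` preserves the absence of
zeros in `H` unless it annihilates the polynomial, because the logarithmic derivative
`p' / p = ∑ 1 / (y - r)` maps `H` into the lower half-plane; it remains to evaluate at `z` itself.

*Necessity.* The image of `xᵐ (x² - 1)` splits only if `γ m * γ (m + 2) ≥ 0`; since `γ` is convex
and eventually positive, it is then nonnegative. The image of `(x + 1)ⁿ` has a quadratic factor,
whose discriminant yields the upper bound on `β` as `n → ∞`. Under this bound, if `α < -1`, the
natural number nearest to `-α / 2` would give a negative term.
-/

theorem hyperbolic_iff_splits {p : ℝ[X]} : Hyperbolic p ↔ p.Splits := by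
  constructor
  · intro hp
    refine (IsAlgClosed.splits (p.map (algebraMap ℝ ℂ))).of_splits_map _ fun z hz => ?_
    exact ⟨z.re, Complex.ext rfl (hp z hz).symm⟩
  · intro hp z hz
    rw [hp.roots_map, Multiset.mem_map] at hz
    obtain ⟨x, -, rfl⟩ := hz
    exact Complex.ofReal_im x

section DiagonalOperator

variable {R S : Type*} [CommSemiring R] [CommSemiring S]

/-- The linear operator `X ^ k ↦ γ k • X ^ k` on polynomials. -/
noncomputable def diagonalOperator (γ : ℕ → R) : R[X] →ₗ[R] R[X] :=
  lsum fun k => γ k • monomial k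

@[simp]
theorem diagonalOperator_monomial (γ : ℕ → R) (k : ℕ) (a : R) :
    diagonalOperator γ (monomial k a) = monomial k (γ k * a) := by
  simp [diagonalOperator, smul_monomial]

theorem diagonalOperator_sum_C_mul_X_pow (γ a : ℕ → R) (s : Finset ℕ) :
    diagonalOperator γ (∑ k ∈ s, C (a k) * X ^ k) = ∑ k ∈ s, C (γ k * a k) * X ^ k := by
  simp only [C_mul_X_pow_eq_monomial, map_sum, diagonalOperator_monomial]

theorem map_diagonalOperator (f : R →+* S) (γ : ℕ → R) (p : R[X]) :
    (diagonalOperator γ p).map f = diagonalOperator (f ∘ γ) (p.map f) := by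
  induction p using Polynomial.induction_on' with
  | add p q hp hq => simp only [map_add, Polynomial.map_add, hp, hq]
  | monomial k a => simp

theorem diagonalOperator_X_pow_mul_quadratic (γ : ℕ → R) (m : ℕ) (a b c : R) :
    diagonalOperator γ (X ^ m * (C a * X ^ 2 + C b * X + C c)) =
      X ^ m * (C (γ (m + 2) * a) * X ^ 2 + C (γ (m + 1) * b) * X + C (γ m * c)) := by
  have expand (a b c : R) : X ^ m * (C a * X ^ 2 + C b * X + C c) =
      monomial (m + 2) a + monomial (m + 1) b + monomial m c := by
    simp only [← C_mul_X_pow_eq_monomial]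
    ring
  simp only [expand, map_add, diagonalOperator_monomial]

theorem diagonalOperator_quadratic_apply (a b : R) (p : R[X]) :
    diagonalOperator (fun k => (k : R) ^ 2 + a * k + b) p =
      X ^ 2 * derivative (derivative p) + C (a + 1) * (X * derivative p) + C b * p := by
  induction p using Polynomial.induction_on' with
  | add p q hp hq =>
    simp only [map_add, hp, hq]
    ring
  | monomial k c =>
    rw [diagonalOperator_monomial]
    rcases k with _ | _ | k
    · simp
    · simp only [zero_add, Nat.cast_one, one_pow, mul_one, ← C_mul_X_pow_eq_monomial, map_mul,
        map_add, map_one, pow_one, derivative_C_mul, derivative_X, derivative_C, mul_zero]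
      ring
    · simp only [Nat.cast_add, Nat.cast_one, ← C_mul_X_pow_eq_monomial, map_mul, map_add, map_pow,
        map_natCast, map_one, derivative_mul, derivative_C, zero_mul, derivative_X_pow_succ,
        zero_add, derivative_natCast, derivative_one, add_zero]
      ring

theorem diagonalOperator_quadratic_X_add_one_pow (a b : R) (m : ℕ) :
    diagonalOperator (fun k => (k : R) ^ 2 + a * k + b) ((X + 1) ^ (m + 2)) =
      (X + 1) ^ m * (C (((m + 2 : ℕ) : R) ^ 2 + a * (m + 2 : ℕ) + b) * X ^ 2 +
        C ((a + 1) * (m + 2 : ℕ) + 2 * b) * X + C b) := by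
  have hderiv (n : ℕ) :
      derivative ((X + 1) ^ (n + 1) : R[X]) = C ((n : R) + 1) * (X + 1) ^ n := by
    simp [derivative_pow]
  rw [diagonalOperator_quadratic_apply, hderiv, derivative_C_mul, hderiv]
  simp only [Nat.cast_add, Nat.cast_ofNat, Nat.cast_one, map_add, map_mul, map_pow, map_natCast,
    map_one, map_ofNat C]
  ring

end DiagonalOperator

theorem isMultiplierSeqFor_X_pow_iff {γ : ℕ → ℝ} :
    IsMultiplierSeqFor (fun k => X ^ k) γ ↔
      ∀ p : ℝ[X], p.Splits → (diagonalOperator γ p).Splits := by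
  simp only [IsMultiplierSeqFor, ← diagonalOperator_sum_C_mul_X_pow, hyperbolic_iff_splits]
  refine ⟨fun h p => ?_, fun h n a => h _⟩
  simpa only [← as_sum_range_C_mul_X_pow] using h (p.natDegree + 1) p.coeff

/-- A complex polynomial is *stable* if it has no zero in the open upper half-plane. In particular
the zero polynomial is not stable. -/
def IsStable (p : ℂ[X]) : Prop :=
  ∀ z : ℂ, 0 < z.im → p.eval z ≠ 0

theorem hyperbolic_iff_eq_zero_or_isStable {p : ℝ[X]} :
    Hyperbolic p ↔ p = 0 ∨ IsStable (p.map (algebraMap ℝ ℂ)) := by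
  rcases eq_or_ne p 0 with rfl | hp
  · simp [Hyperbolic]
  have hmap : p.map (algebraMap ℝ ℂ) ≠ 0 := Polynomial.map_ne_zero hp
  simp only [Hyperbolic, IsStable, hp, false_or, mem_roots hmap, IsRoot.def, eval_map_algebraMap]
  refine ⟨fun h z hz hroot => hz.ne' (h z hroot), fun h z hroot => ?_⟩
  have hconj : aeval (starRingEnd ℂ z) p = 0 := by rw [aeval_conj, hroot, map_zero]
  refine le_antisymm (not_lt.1 fun hz => h z hz hroot) (not_lt.1 fun hz => h _ ?_ hconj)
  simpa using hz

namespace IsStable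

variable {p : ℂ[X]} {u v : ℝ} {z : ℂ}

theorem im_logDeriv_neg (hp : IsStable p) (hp' : derivative p ≠ 0) (hz : 0 < z.im) :
    (p.derivative.eval z / p.eval z).im < 0 := by
  have hroots : p.roots ≠ 0 :=
    (IsAlgClosed.splits p).roots_ne_zero (mt derivative_of_natDegree_zero hp')
  have im_term_neg : ∀ r ∈ p.roots, (1 / (z - r)).im < 0 := by
    intro r hr
    have hr_im : r.im ≤ 0 := not_lt.1 fun h => hp r h (isRoot_of_mem_roots hr)
    have hsub : 0 < (z - r).im := by
      rw [Complex.sub_im]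
      linarith
    have hne : z - r ≠ 0 := fun h => by simp [h] at hsub
    rw [one_div, Complex.inv_im]
    exact div_neg_of_neg_of_pos (neg_lt_zero.2 hsub) (Complex.normSq_pos.2 hne)
  rw [(IsAlgClosed.splits p).eval_derivative_div_eval_of_ne_zero (hp z hz),
    ← Complex.coe_imAddGroupHom, map_multiset_sum, Multiset.map_map]
  simpa using Multiset.sum_lt_sum_of_nonempty hroots im_term_neg

theorem C_mul_add_C_mul_derivative (hp : IsStable p) (hu : 0 ≤ u) (hz : 0 < z.im)
    (hne : u = 0 → derivative p ≠ 0) : IsStable (C (u : ℂ) * p + C z * derivative p) := by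
  intro y hy hroot
  have hz0 : z ≠ 0 := fun h => by simp [h] at hz
  have hpy := hp y hy
  simp only [eval_add, eval_mul, eval_C] at hroot
  by_cases hp' : derivative p = 0
  · have hu0 : u ≠ 0 := fun h => hne h hp'
    simp [hp', hu0, hpy] at hroot
  · have hlog : p.derivative.eval y / p.eval y = u * -z⁻¹ := by
      field_simp
      linear_combination hroot
    have him : 0 ≤ (p.derivative.eval y / p.eval y).im := by
      rw [hlog, Complex.im_ofReal_mul, Complex.neg_im, Complex.inv_im]
      have := Complex.normSq_nonneg z
      rw [neg_div, neg_neg]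
      positivity
    exact (hp.im_logDeriv_neg hp' hy).not_ge him

theorem diagonalOperator_quadratic (hp : IsStable p) (hu : 0 ≤ u) (hv : 0 ≤ v)
    (hne : diagonalOperator (fun k => (k : ℂ) ^ 2 + (u + v - 1) * k + u * v) p ≠ 0) :
    IsStable (diagonalOperator (fun k => (k : ℂ) ^ 2 + (u + v - 1) * k + u * v) p) := by
  -- Applying the smaller parameter first, a factor can annihilate only if the whole image is zero.
  wlog huv : u ≤ v generalizing u v
  · rw [add_comm (u : ℂ), mul_comm (u : ℂ)] at hne ⊢
    exact this hv hu hne (le_of_not_ge huv)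
  rw [diagonalOperator_quadratic_apply, sub_add_cancel] at hne ⊢
  intro z hz hroot
  have hz0 : z ≠ 0 := fun h => by simp [h] at hz
  have hfirst : IsStable (C (u : ℂ) * p + C z * derivative p) := by
    refine hp.C_mul_add_C_mul_derivative hu hz fun hu0 hp' => hne ?_
    simp [hu0, hp']
  have hsecond : IsStable (C (v : ℂ) * (C (u : ℂ) * p + C z * derivative p) +
      C z * derivative (C (u : ℂ) * p + C z * derivative p)) := by
    refine hfirst.C_mul_add_C_mul_derivative hv hz fun hv0 hfirst' => hne ?_
    have hu0 : u = 0 := le_antisymm (huv.trans_eq hv0) hu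
    have hp'' : derivative (derivative p) = 0 := by simpa [hu0, hz0] using hfirst'
    simp [hu0, hv0, hp'']
  refine hsecond z hz ?_
  simp only [derivative_add, derivative_C_mul, eval_add, eval_mul, eval_C, eval_pow, eval_X]
    at hroot ⊢
  linear_combination hroot

end IsStable

theorem Hyperbolic.diagonalOperator_quadratic {p : ℝ[X]} (hp : Hyperbolic p) {u v : ℝ}
    (hu : 0 ≤ u) (hv : 0 ≤ v) :
    Hyperbolic (diagonalOperator (fun k => (k : ℝ) ^ 2 + (u + v - 1) * k + u * v) p) := by
  rw [hyperbolic_iff_eq_zero_or_isStable] at hp ⊢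
  rcases hp with rfl | hp
  · exact .inl (map_zero _)
  refine or_iff_not_imp_left.2 fun hne => ?_
  have hmap := map_diagonalOperator (algebraMap ℝ ℂ)
    (fun k => (k : ℝ) ^ 2 + (u + v - 1) * k + u * v) p
  have hcoe : algebraMap ℝ ℂ ∘ (fun k : ℕ => (k : ℝ) ^ 2 + (u + v - 1) * k + u * v) =
      fun k : ℕ => (k : ℂ) ^ 2 + (u + v - 1) * k + u * v := by
    ext k
    simp
  rw [hcoe] at hmap
  rw [hmap]
  exact hp.diagonalOperator_quadratic hu hv (hmap ▸ Polynomial.map_ne_zero hne)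

theorem exists_nonneg_add_eq_mul_eq {s t : ℝ} (hs : 0 ≤ s) (ht : 0 ≤ t) (hst : 4 * t ≤ s ^ 2) :
    ∃ u v : ℝ, 0 ≤ u ∧ 0 ≤ v ∧ u + v = s ∧ u * v = t := by
  have hsq : √(s ^ 2 - 4 * t) ^ 2 = s ^ 2 - 4 * t := Real.sq_sqrt (by linarith)
  have hle : √(s ^ 2 - 4 * t) ≤ s := Real.sqrt_le_iff.2 ⟨hs, by linarith⟩
  refine ⟨(s - √(s ^ 2 - 4 * t)) / 2, (s + √(s ^ 2 - 4 * t)) / 2, by linarith, by positivity,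
    by ring, ?_⟩
  linear_combination -hsq / 4

theorem isSquare_discrim_of_splits {K : Type*} [Field K] {a b c : K}
    (h : (C a * X ^ 2 + C b * X + C c).Splits) : IsSquare (discrim a b c) := by
  rcases eq_or_ne a 0 with rfl | ha
  · exact ⟨b, by simp [discrim, sq]⟩
  · obtain ⟨x, hx⟩ := h.exists_eval_eq_zero (by simp [degree_quadratic ha])
    refine ⟨2 * a * x + b, ?_⟩
    rw [← sq]
    refine discrim_eq_sq_of_quadratic_eq_zero ?_
    simpa [sq] using hx

theorem discrim_nonneg_of_splits_mul {K : Type*} [Field K] [LinearOrder K] [IsStrictOrderedRing K]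
    {p : K[X]} (hp : p ≠ 0) {a b c : K}
    (h : (p * (C a * X ^ 2 + C b * X + C c)).Splits) : 0 ≤ discrim a b c := by
  refine (isSquare_discrim_of_splits ?_).nonneg
  by_cases hq : C a * X ^ 2 + C b * X + C c = 0
  · exact hq ▸ Splits.zero
  · exact h.of_dvd (mul_ne_zero hp hq) (dvd_mul_left _ _)

theorem exists_ge_quadratic_nonneg (a b : ℝ) (m : ℕ) :
    ∃ N ≥ m, 0 ≤ (N : ℝ) ^ 2 + a * N + b := by
  obtain ⟨n, hn⟩ := exists_nat_ge (|a| + |b| + 1)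
  refine ⟨m + n, Nat.le_add_right m n, ?_⟩
  have hN : |a| + |b| + 1 ≤ ((m + n : ℕ) : ℝ) := by
    push_cast
    linarith [m.cast_nonneg (α := ℝ)]
  have hlinear : |b| + 1 ≤ ((m + n : ℕ) : ℝ) + a := by linarith [neg_abs_le a]
  nlinarith [abs_nonneg a, abs_nonneg b, neg_abs_le b]

namespace IsMultiplierSeqFor

theorem mul_add_two_nonneg {γ : ℕ → ℝ} (h : IsMultiplierSeqFor (fun k => X ^ k) γ) (m : ℕ) :
    0 ≤ γ m * γ (m + 2) := by
  have hsplits : (X ^ m * (C 1 * X ^ 2 + C 0 * X + C (-1)) : ℝ[X]).Splits := by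
    have hfactor : (C 1 * X ^ 2 + C 0 * X + C (-1) : ℝ[X]) = (X - C 1) * (X + C 1) := by
      simp only [map_one, map_zero, map_neg]
      ring
    rw [hfactor]
    exact (Splits.X_pow m).mul ((Splits.X_sub_C 1).mul (Splits.X_add_C 1))
  have himage := isMultiplierSeqFor_X_pow_iff.1 h _ hsplits
  rw [diagonalOperator_X_pow_mul_quadratic] at himage
  have hdiscrim := discrim_nonneg_of_splits_mul (pow_ne_zero m X_ne_zero) himage
  rw [discrim] at hdiscrim
  linarith

variable {α β : ℝ}

theorem quadratic_nonneg
    (h : IsMultiplierSeqFor (fun k => X ^ k) (fun k => (k : ℝ) ^ 2 + α * k + β)) (m : ℕ) :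
    0 ≤ (m : ℝ) ^ 2 + α * m + β := by
  obtain ⟨N, hmN, hN⟩ := exists_ge_quadratic_nonneg α β m
  induction hmN using Nat.decreasingInduction with
  | self => exact hN
  | of_succ k _ hsucc =>
    by_contra! hneg
    have hconvex : 0 < ((k + 2 : ℕ) : ℝ) ^ 2 + α * (k + 2 : ℕ) + β := by
      push_cast at hsucc ⊢
      linarith
    exact (mul_neg_of_neg_of_pos hneg hconvex).not_ge (h.mul_add_two_nonneg k)

theorem quadratic_const_coeff_le
    (h : IsMultiplierSeqFor (fun k => X ^ k) (fun k => (k : ℝ) ^ 2 + α * k + β)) :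
    β ≤ (α + 1) ^ 2 / 4 := by
  have hbound (m : ℕ) : ((m + 2 : ℕ) : ℝ) * (4 * β - (α + 1) ^ 2) ≤ 4 * β := by
    have hsplits : ((X + 1) ^ (m + 2) : ℝ[X]).Splits := (Splits.X_add_C 1).pow _
    have himage := isMultiplierSeqFor_X_pow_iff.1 h _ hsplits
    rw [diagonalOperator_quadratic_X_add_one_pow] at himage
    have hdiscrim := discrim_nonneg_of_splits_mul (pow_ne_zero m (X_add_C_ne_zero 1)) himage
    have hpos : (0 : ℝ) < (m + 2 : ℕ) := by positivity
    refine le_of_mul_le_mul_left ?_ hpos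
    rw [discrim] at hdiscrim
    linarith
  by_contra! hβ
  obtain ⟨m, hm⟩ := exists_nat_gt (4 * β / (4 * β - (α + 1) ^ 2))
  rw [div_lt_iff₀ (by linarith)] at hm
  have := hbound m
  push_cast at this
  linarith

theorem quadratic_neg_one_le_linear_coeff
    (h : IsMultiplierSeqFor (fun k => X ^ k) (fun k => (k : ℝ) ^ 2 + α * k + β)) :
    -1 ≤ α := by
  by_contra! hα
  obtain ⟨k, hk⟩ : ∃ k : ℕ, |k + α / 2| ≤ 1 / 2 := by
    have hle := Nat.floor_le (a := (1 - α) / 2) (by linarith)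
    have hlt := Nat.lt_floor_add_one ((1 - α) / 2)
    exact ⟨⌊(1 - α) / 2⌋₊, abs_le.2 ⟨by linarith, by linarith⟩⟩
  have hsq : ((k : ℝ) + α / 2) ^ 2 ≤ (1 / 2) ^ 2 := sq_le_sq' (abs_le.1 hk).1 (abs_le.1 hk).2
  linarith [h.quadratic_nonneg k, h.quadratic_const_coeff_le]

end IsMultiplierSeqFor

theorem stmt_12 (α β : ℝ) :
    IsMultiplierSeqFor (fun k => X ^ k) (fun k => (k : ℝ) ^ 2 + α * k + β) ↔
      (-1 ≤ α ∧ 0 ≤ β ∧ β ≤ (α + 1) ^ 2 / 4) := by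
  constructor
  · intro h
    have hβ : 0 ≤ β := by simpa using h.quadratic_nonneg 0
    exact ⟨h.quadratic_neg_one_le_linear_coeff, hβ, h.quadratic_const_coeff_le⟩
  · rintro ⟨hα, hβ, hαβ⟩
    obtain ⟨u, v, hu, hv, hadd, rfl⟩ := exists_nonneg_add_eq_mul_eq (s := α + 1) (t := β)
      (by linarith) hβ (by linarith)
    obtain rfl : α = u + v - 1 := by linarith
    rw [isMultiplierSeqFor_X_pow_iff]
    intro p hp
    rw [← hyperbolic_iff_splits] at hp ⊢
    exact hp.diagonalOperator_quadratic hu hv
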